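/- arXiv:2501.10076 — 2 statements merged into one kernel-verified Lean document; each statement's English description precedes it below -/
import Mathlib

section
/- For any parameters 0 < t_0 < t_1 < ⋯ < t_{n-1}, the Bessel collocation matrix M = (B_{j-1}(t_{i-1}))_{1≤i,j≤n} is strictly totally positive: all its minors are positive. -/
/-- The Bessel polynomial `B_m` evaluated at `x`. -/
noncomputable def besselPoly (m : ℕ) (x : ℝ) : ℝ :=
  ∑ k ∈ Finset.range (m + 1),
    ((m + k).factorial : ℝ) / (2 ^ k * (m - k).factorial * k.factorial) * x ^ k

/-!
Write `y a m` for the generalized Bessel polynomials; `a = 0` is the classical case. They satisfy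
`y a (m + 1) = y a m + (m + 1 + a / 2) * x * y (a + 1) m`. Hence the family
`1, x, …, x ^ s, x ^ s * y s 1, x ^ s * y s 2, …` arises from the one for `s + 1` by replacing
columns from left to right, each with a positive multiple of itself plus a nonnegative multiple of
the already replaced column on its left. Such replacements preserve strict total positivity, so
the case `s = 0` reduces to large `s`, that is, to monomials. Generalized Vandermonde determinants
at distinct positive nodes do not vanish, by Descartes' rule of signs; as the increasing positive
node vectors form a connected set, positivity need only be checked at one of them.
-/

open Function Matrix

section SubmatrixUpdateCol

variable {ι κ μ ν R : Type*}

theorem submatrix_updateCol_of_forall_ne [DecidableEq κ] (A : Matrix ι κ R) (r : μ → ι)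
    {c : ν → κ} {q : κ} (hq : ∀ j, c j ≠ q) (v : ι → R) :
    (A.updateCol q v).submatrix r c = A.submatrix r c := by
  ext i j
  simp [hq j]

theorem submatrix_updateCol_of_injective [DecidableEq κ] [DecidableEq ν] (A : Matrix ι κ R)
    (r : μ → ι) {c : ν → κ} (hc : Injective c) (j : ν) (v : ι → R) :
    (A.updateCol (c j) v).submatrix r c = (A.submatrix r c).updateCol j (v ∘ r) := by
  ext i l
  simp [updateCol_apply, hc.eq_iff]

theorem submatrix_update_right [DecidableEq ν] (A : Matrix ι κ R) (r : μ → ι) (c : ν → κ) (j : ν)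
    (p : κ) : A.submatrix r (update c j p) = (A.submatrix r c).updateCol j (A.col p ∘ r) := by
  ext i l
  obtain rfl | hl := eq_or_ne l j <;> simp [*]

end SubmatrixUpdateCol

theorem strictMono_update_of_covBy {α β : Type*} [Preorder α] [DecidableEq α] [LinearOrder β]
    {f : α → β} (hf : StrictMono f) {i : α} {b : β} (hb : b ⋖ f i) (hne : ∀ j, f j ≠ b) :
    StrictMono (update f i b) := by
  intro x y hxy
  obtain rfl | hx := eq_or_ne x i
  · simpa [hxy.ne'] using hb.lt.trans (hf hxy)
  obtain rfl | hy := eq_or_ne y i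
  · have hle : f x ≤ b := not_lt.mp fun hlt => hb.2 hlt (hf hxy)
    simpa [hx] using hle.lt_of_ne (hne x)
  · simpa [hx, hy] using hf hxy

/-- Strict total positivity: every minor is positive. The index types may be infinite, so that
kernels on ordered sets are covered. -/
def IsStrictlyTotallyPositive {ι κ R : Type*} [Preorder ι] [Preorder κ] [CommRing R]
    [PartialOrder R] (A : Matrix ι κ R) : Prop :=
  ∀ ⦃k : ℕ⦄ (r : Fin k → ι) (c : Fin k → κ), StrictMono r → StrictMono c →
    0 < (A.submatrix r c).det

namespace IsStrictlyTotallyPositive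

theorem submatrix {ι κ μ ν R : Type*} [Preorder ι] [Preorder κ] [Preorder μ] [Preorder ν]
    [CommRing R] [PartialOrder R] {A : Matrix ι κ R} (hA : IsStrictlyTotallyPositive A)
    {f : μ → ι} {g : ν → κ} (hf : StrictMono f) (hg : StrictMono g) :
    IsStrictlyTotallyPositive (A.submatrix f g) := fun _ r c hr hc =>
  hA (f ∘ r) (g ∘ c) (hf.comp hr) (hg.comp hc)

section Columns

variable {ι κ R : Type*} [Preorder ι] [LinearOrder κ] [CommRing R] [PartialOrder R]

theorem det_submatrix_update_nonneg {A : Matrix ι κ R} (hA : IsStrictlyTotallyPositive A) {k : ℕ}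
    {r : Fin k → ι} {c : Fin k → κ} (hr : StrictMono r) (hc : StrictMono c) {p : κ} {j : Fin k}
    (hp : p ⋖ c j) : 0 ≤ (A.submatrix r (update c j p)).det := by
  by_cases hmem : ∃ l, c l = p
  · obtain ⟨l, rfl⟩ := hmem
    have hlj : l ≠ j := by
      rintro rfl
      exact hp.lt.false
    exact (det_zero_of_column_eq hlj fun i => by simp [hlj]).ge
  · push Not at hmem
    exact (hA r _ hr (strictMono_update_of_covBy hc hp hmem)).le

variable [IsStrictOrderedRing R]

theorem updateCol_smul_add_smul {A : Matrix ι κ R} (hA : IsStrictlyTotallyPositive A) {p q : κ}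
    (hpq : p ⋖ q) {a b : R} (ha : 0 ≤ a) (hb : 0 < b) :
    IsStrictlyTotallyPositive (A.updateCol q (a • A.col p + b • A.col q)) := by
  intro k r c hr hc
  by_cases hq : ∃ j, c j = q
  · obtain ⟨j, rfl⟩ := hq
    have hcomp : (a • A.col p + b • A.col (c j)) ∘ r =
        a • (A.col p ∘ r) + b • (A.col (c j) ∘ r) := rfl
    have hdet : ((A.updateCol (c j) (a • A.col p + b • A.col (c j))).submatrix r c).det =
        a * (A.submatrix r (update c j p)).det + b * (A.submatrix r c).det := by
      rw [submatrix_updateCol_of_injective A r hc.injective, hcomp, det_updateCol_add,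
        det_updateCol_smul, det_updateCol_smul, ← submatrix_update_right,
        ← submatrix_update_right, update_eq_self]
    rw [hdet]
    exact add_pos_of_nonneg_of_pos (mul_nonneg ha (hA.det_submatrix_update_nonneg hr hc hpq))
      (mul_pos hb (hA r c hr hc))
  · push Not at hq
    rw [submatrix_updateCol_of_forall_ne A r hq]
    exact hA r c hr hc

theorem of_column_recurrence {n : ℕ} {A B : Matrix ι (Fin (n + 1)) R}
    (hA : IsStrictlyTotallyPositive A) (hzero : ∀ i, B i 0 = A i 0)
    (hsucc : ∀ j : Fin n, ∃ a b : R, 0 ≤ a ∧ 0 < b ∧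
      ∀ i, B i j.succ = a * B i j.castSucc + b * A i j.succ) :
    IsStrictlyTotallyPositive B := by
  have replace_initial (p : Fin (n + 1)) :
      IsStrictlyTotallyPositive (of fun i j => if j ≤ p then B i j else A i j) := by
    induction p using Fin.induction with
    | zero =>
      convert hA using 1
      ext i j
      obtain rfl | hj := eq_or_ne j 0 <;> simp [*]
    | succ p ih =>
      obtain ⟨a, b, ha, hb, hrec⟩ := hsucc p
      have hcov : p.castSucc ⋖ p.succ := Fin.covBy_iff.mpr (by simp)
      convert ih.updateCol_smul_add_smul hcov ha hb using 1
      ext i j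
      obtain rfl | hj := eq_or_ne j p.succ
      · simp [hrec]
      · have hle : j ≤ p.succ ↔ j ≤ p.castSucc := by
          rw [hj.le_iff_lt, Fin.le_castSucc_iff]
        simp [hj, hle]
  convert replace_initial (Fin.last n) using 1
  ext i j
  simp [Fin.le_last]

end Columns

end IsStrictlyTotallyPositive

section GeneralizedVandermonde

open Polynomial

theorem signVariations_lt_card_support {R : Type*} [Semiring R] [LinearOrder R] {P : R[X]}
    (hP : P ≠ 0) : P.signVariations < P.support.card := by
  induction h : P.support.card generalizing P with
  | zero => simp_all
  | succ n ih =>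
    by_cases hE : P.eraseLead = 0
    · simp [signVariations_eq_eraseLead_add_ite hP, hE, hP]
    · have := ih hE (card_support_eraseLead' h)
      have := signVariations_le_eraseLead_succ (P := P)
      omega

variable {R : Type*} [CommRing R] [LinearOrder R] [IsStrictOrderedRing R]

theorem card_lt_card_support_of_pos_isRoot {P : R[X]} (hP : P ≠ 0) {s : Finset R}
    (hpos : ∀ x ∈ s, 0 < x) (hroot : ∀ x ∈ s, P.IsRoot x) : s.card < P.support.card := by
  have hle : s.val ≤ P.roots.filter (0 < ·) :=
    (Multiset.le_iff_subset s.nodup).mpr fun x hx =>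
      Multiset.mem_filter.mpr ⟨(mem_roots hP).mpr (hroot x hx), hpos x hx⟩
  calc
    s.card ≤ P.roots.countP (0 < ·) := by
      rw [Multiset.countP_eq_card_filter]
      exact Multiset.card_le_card hle
    _ ≤ P.signVariations := roots_countP_pos_le_signVariations P
    _ < P.support.card := signVariations_lt_card_support hP

theorem det_pow_ne_zero {ι : Type*} [Fintype ι] [DecidableEq ι] {t : ι → R} {c : ι → ℕ}
    (hpos : ∀ i, 0 < t i) (ht : Injective t) (hc : Injective c) :
    (of fun i j => t i ^ c j).det ≠ 0 := by
  intro hdet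
  obtain ⟨v, hv, hmul⟩ := exists_mulVec_eq_zero_iff.mpr hdet
  set P : R[X] := ∑ j, monomial (c j) (v j) with hPdef
  have hcoeff (j : ι) : P.coeff (c j) = v j := by
    simp [hPdef, coeff_monomial, hc.eq_iff]
  have hP : P ≠ 0 := fun h0 => hv (funext fun j => by simp [← hcoeff j, h0])
  have hroot (i : ι) : P.IsRoot (t i) := by
    simpa [hPdef, eval_finsetSum, mulVec, dotProduct, mul_comm] using congrFun hmul i
  have hsupp : P.support ⊆ Finset.univ.image c := by
    intro m hm
    contrapose! hm
    have hm' : ∀ j, c j ≠ m := by simpa using hm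
    simp [hPdef, coeff_monomial, hm']
  have hlt : (Finset.univ.image t).card < P.support.card :=
    card_lt_card_support_of_pos_isRoot hP (by simpa using hpos) (by simpa using hroot)
  rw [Finset.card_image_of_injective _ ht] at hlt
  exact hlt.not_ge ((Finset.card_le_card hsupp).trans Finset.card_image_le)

theorem det_vandermonde_pos {n : ℕ} {v : Fin n → R} (hv : StrictMono v) :
    0 < (vandermonde v).det := by
  rw [det_vandermonde]
  exact Finset.prod_pos fun i _ => Finset.prod_pos fun j hj =>
    sub_pos.mpr (hv (Finset.mem_Ioi.mp hj))

end GeneralizedVandermonde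

theorem convex_setOf_pos_and_strictMono {ι 𝕜 : Type*} [Preorder ι] [Semiring 𝕜] [PartialOrder 𝕜]
    [IsStrictOrderedRing 𝕜] : Convex 𝕜 {t : ι → 𝕜 | (∀ i, 0 < t i) ∧ StrictMono t} := by
  rw [convex_iff_forall_pos]
  rintro s ⟨hs, hs'⟩ t ⟨ht, ht'⟩ a b ha hb -
  exact ⟨fun i => add_pos (mul_pos ha (hs i)) (mul_pos hb (ht i)),
    (hs'.const_mul ha).add (ht'.const_mul hb)⟩

theorem det_pow_pos {k : ℕ} {t : Fin k → ℝ} {c : Fin k → ℕ} (hpos : ∀ i, 0 < t i)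
    (ht : StrictMono t) (hc : StrictMono c) : 0 < (of fun i j => t i ^ c j).det := by
  set D : (Fin k → ℝ) → ℝ := fun s => (of fun i j => s i ^ c j).det
  set S : Set (Fin k → ℝ) := {s | (∀ i, 0 < s i) ∧ StrictMono s}
  have hcont : Continuous D :=
    Continuous.matrix_det (continuous_matrix fun i j => by simp only [of_apply]; fun_prop)
  have hne : ∀ s ∈ S, D s ≠ 0 := fun s hs => det_pow_ne_zero hs.1 hs.2.injective hc.injective
  set u : Fin k → ℝ := fun i => 2 ^ (i : ℕ)
  have hu : u ∈ S :=
    ⟨fun i => by positivity, fun i j hij => pow_lt_pow_right₀ one_lt_two hij⟩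
  -- At the nodes `2 ^ i` the transpose is an ordinary Vandermonde matrix with nodes `2 ^ c j`.
  have hDu : 0 < D u := by
    have hvand : (of fun i j => u i ^ c j) = (vandermonde fun j => (2 : ℝ) ^ c j)ᵀ := by
      ext i j
      simp [u, vandermonde_apply, ← pow_mul, mul_comm]
    simp only [D, hvand, det_transpose]
    exact det_vandermonde_pos fun i j hij => pow_lt_pow_right₀ one_lt_two (hc hij)
  by_contra! hDt
  obtain ⟨s, hs, hDs⟩ := convex_setOf_pos_and_strictMono.isPreconnected.intermediate_value
    (show t ∈ S from ⟨hpos, ht⟩) hu hcont.continuousOn ⟨hDt, hDu.le⟩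
  exact hne s hs hDs

theorem isStrictlyTotallyPositive_pow :
    IsStrictlyTotallyPositive (of fun (x : Set.Ioi (0 : ℝ)) (j : ℕ) => (x : ℝ) ^ j) :=
  fun _ r _ hr hc => det_pow_pos (fun i => (r i).2) (fun _ _ hij => hr hij) hc

/-- The generalized Bessel polynomial `y_m(x; a + 2)` of Krall and Frink; the shift of the
parameter makes `a = 0` the classical case. -/
noncomputable def generalizedBesselPoly (a m : ℕ) (x : ℝ) : ℝ :=
  ∑ k ∈ Finset.range (m + 1), (m.choose k : ℝ) * ((m + a + 1).ascFactorial k : ℝ) * (x / 2) ^ k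

theorem generalizedBesselPoly_zero_right (a : ℕ) (x : ℝ) : generalizedBesselPoly a 0 x = 1 := by
  simp [generalizedBesselPoly]

theorem generalizedBesselPoly_zero_left (m : ℕ) (x : ℝ) :
    generalizedBesselPoly 0 m x = besselPoly m x := by
  refine Finset.sum_congr rfl fun k hk => ?_
  have hkm : k ≤ m := Finset.mem_range_succ_iff.mp hk
  have hasc : (m.factorial : ℝ) * ((m + 1).ascFactorial k : ℝ) = ((m + k).factorial : ℝ) := by
    exact_mod_cast Nat.factorial_mul_ascFactorial m k
  rw [Nat.cast_choose ℝ hkm, add_zero, ← hasc, div_pow]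
  field_simp

theorem choose_mul_ascFactorial_succ (a m k : ℕ) :
    (m + 1).choose (k + 1) * (m + a + 2).ascFactorial (k + 1) =
      m.choose (k + 1) * (m + a + 1).ascFactorial (k + 1) +
        (2 * (m + 1) + a) * (m.choose k * (m + a + 2).ascFactorial k) := by
  have hchoose : m.choose (k + 1) * (k + 1) + m.choose k * k = m.choose k * m := by
    obtain hkm | hmk := le_or_gt k m
    · rw [Nat.choose_succ_right_eq, ← mul_add, Nat.sub_add_cancel hkm]
    · simp [Nat.choose_eq_zero_of_lt hmk, Nat.choose_eq_zero_of_lt (hmk.trans k.lt_succ_self)]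
  have hasc : (m + a + 1).ascFactorial (k + 1) = (m + a + 1) * (m + a + 2).ascFactorial k := by
    rw [Nat.succ_ascFactorial, Nat.ascFactorial_succ]
  rw [hasc, Nat.ascFactorial_succ, Nat.choose_succ_succ]
  linear_combination (m + a + 2).ascFactorial k * hchoose

theorem generalizedBesselPoly_succ (a m : ℕ) (x : ℝ) :
    generalizedBesselPoly a (m + 1) x = generalizedBesselPoly a m x +
      (m + 1 + a / 2) * (x * generalizedBesselPoly (a + 1) m x) := by
  have hext : generalizedBesselPoly a m x = ∑ k ∈ Finset.range (m + 2),
      (m.choose k : ℝ) * ((m + a + 1).ascFactorial k : ℝ) * (x / 2) ^ k := by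
    simp [generalizedBesselPoly, Finset.sum_range_succ _ (m + 1)]
  have hcoeff (k : ℕ) :
      ((m + 1).choose (k + 1) : ℝ) * ((m + a + 2).ascFactorial (k + 1) : ℝ) =
        m.choose (k + 1) * (m + a + 1).ascFactorial (k + 1) +
          (2 * (m + 1) + a) * (m.choose k * (m + a + 2).ascFactorial k) := by
    exact_mod_cast choose_mul_ascFactorial_succ a m k
  rw [hext, generalizedBesselPoly, generalizedBesselPoly, Finset.sum_range_succ' _ (m + 1),
    Finset.sum_range_succ' _ (m + 1), Finset.mul_sum, Finset.mul_sum, add_right_comm (∑ k ∈ _, _),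
    ← Finset.sum_add_distrib]
  congr 1
  · refine Finset.sum_congr rfl fun k _ => ?_
    rw [show m + 1 + a + 1 = m + a + 2 by ring, show m + (a + 1) + 1 = m + a + 2 by ring]
    linear_combination (x / 2) ^ (k + 1) * hcoeff k
  · simp

/-- The families joining the monomials, which are the members with `j ≤ s`, to the Bessel
polynomials, which are the family `s = 0`. -/
noncomputable def besselInterpolant (s j : ℕ) (x : ℝ) : ℝ :=
  x ^ min s j * generalizedBesselPoly s (j - s) x

theorem besselInterpolant_of_le {s j : ℕ} (h : j ≤ s) (x : ℝ) :
    besselInterpolant s j x = x ^ j := by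
  simp [besselInterpolant, h, generalizedBesselPoly_zero_right]

theorem besselInterpolant_zero_left (j : ℕ) (x : ℝ) :
    besselInterpolant 0 j x = besselPoly j x := by
  simp [besselInterpolant, generalizedBesselPoly_zero_left]

theorem besselInterpolant_succ {s j : ℕ} (h : s ≤ j) (x : ℝ) :
    besselInterpolant s (j + 1) x =
      besselInterpolant s j x + (j + 1 - s / 2) * besselInterpolant (s + 1) (j + 1) x := by
  obtain ⟨m, rfl⟩ := Nat.exists_eq_add_of_le h
  have hsub : s + m + 1 - s = m + 1 := by omega
  simp only [besselInterpolant, hsub, Nat.add_sub_add_right, Nat.add_sub_cancel_left,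
    min_eq_left h, min_eq_left (h.trans (Nat.le_succ _)), min_eq_left (Nat.add_le_add_right h 1),
    generalizedBesselPoly_succ]
  push_cast
  ring

theorem isStrictlyTotallyPositive_besselInterpolant_of_le {n s : ℕ} (h : n ≤ s) :
    IsStrictlyTotallyPositive
      (of fun (x : Set.Ioi (0 : ℝ)) (j : Fin (n + 1)) => besselInterpolant s j x) := by
  convert isStrictlyTotallyPositive_pow.submatrix strictMono_id Fin.val_strictMono using 1
  ext x j
  exact besselInterpolant_of_le (j.is_le.trans h) x

theorem isStrictlyTotallyPositive_besselInterpolant {n s : ℕ} (h : s ≤ n) :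
    IsStrictlyTotallyPositive
      (of fun (x : Set.Ioi (0 : ℝ)) (j : Fin (n + 1)) => besselInterpolant s j x) := by
  induction h using Nat.decreasingInduction with
  | self => exact isStrictlyTotallyPositive_besselInterpolant_of_le le_rfl
  | of_succ s _ ih =>
    refine ih.of_column_recurrence (fun x => ?_) fun j => ?_
    · simp [besselInterpolant_of_le]
    obtain hj | hj := lt_or_ge (j : ℕ) s
    · refine ⟨0, 1, le_rfl, one_pos, fun x => ?_⟩
      simp [besselInterpolant_of_le, hj, hj.le]
    · have hpos : (0 : ℝ) < j + 1 - s / 2 := by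
        have : (s : ℝ) ≤ j := by exact_mod_cast hj
        linarith [(j : ℕ).cast_nonneg (α := ℝ)]
      exact ⟨1, _, zero_le_one, hpos, fun x => by simp [besselInterpolant_succ hj]⟩

theorem bessel_collocation_STP (n : ℕ) (t : Fin n → ℝ)
    (hpos : ∀ i, 0 < t i) (hmono : StrictMono t) :
    let M : Matrix (Fin n) (Fin n) ℝ := fun i j => besselPoly j (t i)
    ∀ (k : ℕ) (r c : Fin k → Fin n), StrictMono r → StrictMono c →
      0 < (M.submatrix r c).det := by
  intro M k r c hr hc
  have hkernel : IsStrictlyTotallyPositive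
      (of fun (x : Set.Ioi (0 : ℝ)) (j : Fin (n + 1)) => besselPoly j x) := by
    simpa only [besselInterpolant_zero_left] using
      isStrictlyTotallyPositive_besselInterpolant n.zero_le
  let node (i : Fin n) : Set.Ioi (0 : ℝ) := ⟨t i, hpos i⟩
  have hnode : StrictMono node := fun _ _ hij => hmono hij
  exact hkernel.submatrix hnode Fin.strictMono_castSucc r c hr hc
end

section
/- All eigenvalues of a Bessel collocation matrix M = (B_{j-1}(t_{i-1}))_{1≤i,j≤n} with 0 < t_0 < ⋯ < t_{n-1} are real, positive, and pairwise distinct. -/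
/-!
Every minor of `M` on increasing rows and columns is positive. Indeed, with `z l = l (l + 1)`, one
has `B_m(x) = ∑ k, x ^ k / (2 ^ k k!) * ∏ l < k, (z m - z l)`, a Newton interpolation polynomial in
`z m`. Passing from the divided differences `x ^ k / (2 ^ k k!)` at `z 0` to the values at the nodes
takes column operations `column j ↦ w j * column j + v j * column (j - 1)` with `w > 0` and `v ≥ 0`,
which preserve the positivity of minors, and the minors of `(x_a ^ k)` are generalized Vandermonde
determinants.

The spectrum is found by deflation. A positive matrix has a positive eigenvector, and conjugating by
the corresponding diagonal matrix makes all row sums equal to the eigenvalue `c`. The quotient of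
the action by the constant vectors is then a matrix of size one less, whose minors on consecutive
rows are again positive and whose column sums are less than `c`. Hence all the other eigenvalues are
less than `c`, and induction on the size applies.
-/

open Finset Matrix Polynomial

section MaximalMinors

variable {R : Type*} [CommRing R] [PartialOrder R] {k : ℕ} {ι κ : Type*}

/-- All minors of `G` of full height `k`, on columns in increasing order, are positive. -/
def MaximalMinorsPos [Preorder ι] (G : Matrix (Fin k) ι R) : Prop :=
  ∀ f : Fin k → ι, StrictMono f → 0 < (G.submatrix id f).det

theorem det_sum_mul_eq_sum_piFinset {R : Type*} [CommRing R] (G : Matrix (Fin k) ι R)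
    (T : Fin k → Finset ι) (w : Fin k → ι → R) :
    (of fun a b => ∑ l ∈ T b, w b l * G a l).det =
      ∑ f ∈ Fintype.piFinset T, (∏ b, w b (f b)) * (G.submatrix id f).det := by
  have hcols : (of fun a b => ∑ l ∈ T b, w b l * G a l)ᵀ =
      fun b => ∑ l ∈ T b, fun a => w b l * G a l := by
    ext b a
    simp [Finset.sum_apply]
  rw [← det_transpose, hcols]
  refine (detRowAlternating.toMultilinearMap.map_sum_finset
    (fun b l a => w b l * G a l) T).trans (sum_congr rfl fun f _ => ?_)
  rw [← det_mul_row, ← det_transpose]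
  rfl

namespace MaximalMinorsPos

variable [IsStrictOrderedRing R]

/- In the multilinear expansion, the supports being sorted, only weakly increasing choices of
columns occur. Those with a repetition contribute zero. -/
theorem sum_mul [LinearOrder ι] [Preorder κ] {G : Matrix (Fin k) ι R} (hG : MaximalMinorsPos G)
    {T : κ → Finset ι} {w : κ → ι → R} (hw : ∀ b, ∀ l ∈ T b, 0 ≤ w b l)
    (hT : ∀ b b', b < b' → ∀ l ∈ T b, ∀ l' ∈ T b', l ≤ l')
    {p : κ → ι} (hp : StrictMono p) (hpT : ∀ b, p b ∈ T b) (hpw : ∀ b, 0 < w b (p b)) :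
    MaximalMinorsPos (of fun a b => ∑ l ∈ T b, w b l * G a l) := by
  intro g hg
  refine (sum_pos' (fun f hf => ?_) ⟨p ∘ g, Fintype.mem_piFinset.2 fun b => hpT (g b),
    mul_pos (prod_pos fun b _ => hpw (g b)) (hG _ (hp.comp hg))⟩).trans_eq
    (det_sum_mul_eq_sum_piFinset G (T ∘ g) (w ∘ g)).symm
  rw [Fintype.mem_piFinset] at hf
  refine mul_nonneg (prod_nonneg fun b _ => hw (g b) _ (hf b)) ?_
  have hmono : Monotone f := monotone_iff_forall_lt.2 fun b b' hb =>
    hT _ _ (hg hb) _ (hf b) _ (hf b')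
  by_cases hinj : Function.Injective f
  · exact (hG f (hmono.strictMono_of_injective hinj)).le
  · obtain ⟨b, b', hbb, hne⟩ := Function.not_injective_iff.1 hinj
    exact (det_zero_of_column_eq hne fun a => by simp [hbb]).ge

theorem bidiagonal {G : Matrix (Fin k) ℕ R} (hG : MaximalMinorsPos G) {w v : ℕ → R}
    (hw : ∀ j, 0 < w j) (hv : ∀ j, 0 ≤ v j) :
    MaximalMinorsPos (of fun a j => w j * G a j + v j * G a (j - 1)) := by
  have hw' (j l : ℕ) : 0 ≤ if l = j then w j else 0 := by split_ifs <;> simp [(hw j).le]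
  have hv' (j l : ℕ) : 0 ≤ if l = j - 1 then v j else 0 := by split_ifs <;> simp [hv j]
  have h := hG.sum_mul (T := fun j => {j - 1, j})
    (w := fun j l => (if l = j then w j else 0) + if l = j - 1 then v j else 0)
    (fun j l _ => add_nonneg (hw' j l) (hv' j l)) (fun j j' hj l hl l' hl' => by
      simp only [mem_insert, mem_singleton] at hl hl'
      omega)
    strictMono_id (fun j => by simp)
    (fun j => add_pos_of_pos_of_nonneg (by simpa using hw j) (hv' j _))
  convert h using 3 with a j
  simp [add_mul, sum_add_distrib]

theorem mul_columns {G : Matrix (Fin k) ℕ R} (hG : MaximalMinorsPos G) {w : ℕ → R}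
    (hw : ∀ j, 0 < w j) : MaximalMinorsPos (of fun a j => w j * G a j) := by
  simpa using hG.bidiagonal hw (v := 0) fun _ => le_rfl

end MaximalMinorsPos

section PartialSums

variable [LinearOrder ι] [LocallyFiniteOrderBot ι]

theorem det_sum_Iic_eq_det_sum_gaps {R : Type*} [CommRing R] (G : Matrix (Fin k) ι R)
    {f : Fin k → ι} (hf : StrictMono f) :
    (of fun a b => ∑ l ∈ Iic (f b), G a l).det =
      (of fun a b => ∑ l ∈ Iic (f b) with ∀ c < b, f c < l, G a l).det := by
  cases k with
  | zero => simp
  | succ k =>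
    refine det_eq_of_forall_col_eq_smul_add_pred (fun _ => 1) (by simp) fun a b => ?_
    have hlt := hf b.castSucc_lt_succ
    have hgap : {l ∈ Iic (f b.succ) | ∀ c < b.succ, f c < l} =
        Iic (f b.succ) \ Iic (f b.castSucc) := by
      ext l
      simp only [mem_filter, mem_sdiff, mem_Iic, not_le, and_congr_right_iff]
      exact fun _ => ⟨fun h => h _ b.castSucc_lt_succ, fun h c hc =>
        (hf.monotone (Fin.le_castSucc_iff.2 hc)).trans_lt h⟩
    simp only [of_apply, one_mul, hgap]
    exact (sum_sdiff (Iic_subset_Iic.2 hlt.le)).symm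

theorem MaximalMinorsPos.sum_Iic [IsStrictOrderedRing R] {G : Matrix (Fin k) ι R}
    (hG : MaximalMinorsPos G) : MaximalMinorsPos (of fun a j => ∑ l ∈ Iic j, G a l) := by
  intro f hf
  have h := hG.sum_mul (T := fun b => {l ∈ Iic (f b) | ∀ c < b, f c < l}) (w := fun _ _ => 1)
    (fun _ _ _ => zero_le_one) (fun b b' hb l hl l' hl' =>
      (mem_Iic.1 (mem_filter.1 hl).1).trans ((mem_filter.1 hl').2 b hb).le)
    hf (fun b => by simpa using fun c hc => hf hc) (fun _ => zero_lt_one) id strictMono_id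
  simp only [one_mul] at h
  exact (det_sum_Iic_eq_det_sum_gaps G hf).symm ▸ h

end PartialSums

end MaximalMinors

section Vandermonde

variable {R : Type*} [CommRing R] {k : ℕ}

/- Subtract from each column the multiple of the previous one that kills its first entry, and divide
the remaining rows by `s a.succ - s 0`. -/
theorem det_pow_eq_mul_det_sum_Ico (s : Fin (k + 1) → R) {f : Fin (k + 1) → ℕ} (hf : Monotone f) :
    (of fun a b => s a ^ f b).det = s 0 ^ f 0 * ((∏ a : Fin k, (s a.succ - s 0)) *
      (of fun a b : Fin k => ∑ l ∈ Ico (f b.castSucc) (f b.succ),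
        s 0 ^ (f b.succ - 1 - l) * s a.succ ^ l).det) := by
  let H : Matrix (Fin (k + 1)) (Fin (k + 1)) R := of fun a => Fin.cases (s a ^ f 0)
    fun b => s a ^ f b.succ - s 0 ^ (f b.succ - f b.castSucc) * s a ^ f b.castSucc
  have hle (b : Fin k) : f b.castSucc ≤ f b.succ := hf b.castSucc_le_succ
  have hdet : (of fun a b => s a ^ f b).det = H.det :=
    det_eq_of_forall_col_eq_smul_add_pred (fun b => s 0 ^ (f b.succ - f b.castSucc))
      (fun a => by simp [H]) (fun a b => by simp [H])
  have hrow (b : Fin k) : H 0 b.succ = 0 := by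
    simp [H, ← pow_add, Nat.sub_add_cancel (hle b)]
  have hminor : H.submatrix Fin.succ (Fin.succAbove 0) = of fun a b : Fin k =>
      (s a.succ - s 0) * (of fun a b : Fin k => ∑ l ∈ Ico (f b.castSucc) (f b.succ),
        s 0 ^ (f b.succ - 1 - l) * s a.succ ^ l) a b := by
    ext a b
    simp [H, mul_comm (s 0 ^ _), mul_geom_sum₂_Ico _ _ (hle b)]
  rw [hdet, det_succ_row_zero, Fin.sum_univ_succ, hminor, det_mul_column]
  simp [hrow, H]

theorem maximalMinorsPos_pow [PartialOrder R] [IsStrictOrderedRing R] {s : Fin k → R}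
    (hs : ∀ a, 0 < s a) (hmono : StrictMono s) :
    MaximalMinorsPos (of fun a (l : ℕ) => s a ^ l) := by
  induction k with
  | zero => exact fun f _ => by simp
  | succ k ih =>
    intro f hf
    have htail : MaximalMinorsPos (of fun (a : Fin k) (l : ℕ) => s a.succ ^ l) :=
      ih (fun a => hs a.succ) (hmono.comp Fin.strictMono_succ)
    have hsums := htail.sum_mul (T := fun b : Fin k => Ico (f b.castSucc) (f b.succ))
      (w := fun b l => s 0 ^ (f b.succ - 1 - l)) (fun _ _ _ => (pow_pos (hs 0) _).le)
      (fun b b' hb l hl l' hl' => (mem_Ico.1 hl).2.le.trans <|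
        (hf.monotone (Fin.succ_le_castSucc_iff.2 hb)).trans (mem_Ico.1 hl').1)
      (hf.comp Fin.strictMono_castSucc) (fun b => left_mem_Ico.2 (hf b.castSucc_lt_succ))
      (fun _ => pow_pos (hs 0) _)
    refine (mul_pos (pow_pos (hs 0) _) (mul_pos (prod_pos fun a _ => ?_)
      (hsums id strictMono_id))).trans_eq (det_pow_eq_mul_det_sum_Ico s hf.monotone).symm
    exact sub_pos.2 (hmono a.succ_pos)

end Vandermonde

section Newton

variable {R : Type*} [CommRing R]

/-- The Newton interpolation polynomial of degree at most `d` on the nodes `z 0, z 1, …`, with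
divided differences `c 0, …, c d`, evaluated at `x`. -/
def newtonForm (z c : ℕ → R) (d : ℕ) (x : R) : R :=
  ∑ k ∈ range (d + 1), c k * ∏ m ∈ range k, (x - z m)

/-- The divided difference on the nodes `z i, …, z (i + d)` of the function whose divided difference
on `z 0, …, z d` is `c d` for every `d`. The usual recursion is solved for the later nodes, so that
there is no division. -/
def dividedDiff (z c : ℕ → R) : ℕ → ℕ → R
  | 0, d => c d
  | i + 1, d => dividedDiff z c i d + (z (i + 1 + d) - z i) * dividedDiff z c i (d + 1)

theorem newtonForm_succ_eq_shift (z c e : ℕ → R)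
    (he : ∀ d, e d = c d + (z (d + 1) - z 0) * c (d + 1)) (d : ℕ) (x : R) :
    newtonForm z c (d + 1) x = newtonForm (fun m => z (m + 1)) e d x +
      c (d + 1) * ∏ m ∈ range (d + 1), (x - z (m + 1)) := by
  induction d with
  | zero =>
    simp only [newtonForm, sum_range_succ, prod_range_succ, sum_range_zero, prod_range_zero, he]
    ring
  | succ d ih =>
    simp only [newtonForm] at ih ⊢
    rw [sum_range_succ, ih, sum_range_succ _ (d + 1), he (d + 1),
      prod_range_succ' (fun m => x - z m), prod_range_succ (fun m => x - z (m + 1)) (d + 1)]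
    ring

theorem newtonForm_dividedDiff_apply_node (z c : ℕ → R) (i d : ℕ) :
    newtonForm (fun m => z (i + m)) (dividedDiff z c i) d (z (i + d)) =
      dividedDiff z c (i + d) 0 := by
  induction d generalizing i with
  | zero => simp [newtonForm]
  | succ d ih =>
    have hnode : ∏ m ∈ range (d + 1), (z (i + (d + 1)) - z (i + (m + 1))) = 0 :=
      prod_eq_zero (self_mem_range_succ d) (sub_self _)
    rw [newtonForm_succ_eq_shift (fun m => z (i + m)) _ (dividedDiff z c (i + 1))
      (fun d => by simp only [dividedDiff, add_zero, add_right_comm, ← add_assoc]), hnode,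
      mul_zero, add_zero]
    simpa only [add_assoc, add_comm 1] using ih (i + 1)

namespace MaximalMinorsPos

variable [PartialOrder R] [IsStrictOrderedRing R] {k : ℕ} {G : Matrix (Fin k) ℕ R}

/- Column `j` of the matrix holds the divided differences on the nodes `z (min i j), …, z j`. -/
theorem dividedDiff (hG : MaximalMinorsPos G) {z : ℕ → R} (hz : StrictMono z) (i : ℕ) :
    MaximalMinorsPos (of fun a j => dividedDiff z (G a) (min i j) (j - i)) := by
  induction i with
  | zero =>
    simp only [zero_min, Nat.sub_zero, _root_.dividedDiff]
    exact hG
  | succ i ih =>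
    convert ih.bidiagonal (w := fun j => if j ≤ i then 1 else z j - z i)
      (v := fun j => if j ≤ i then 0 else 1) (fun j => ?_) (fun j => ?_) using 2
    · ext a j
      simp only [of_apply]
      split_ifs with hj
      · simp [hj, hj.trans i.le_succ]
      · obtain ⟨d, rfl⟩ := Nat.exists_eq_add_of_lt (not_le.1 hj)
        rw [show i + d + 1 - 1 = i + d by omega, show i + d + 1 - i = d + 1 by omega,
          show i + d + 1 - (i + 1) = d by omega, Nat.add_sub_cancel_left,
          min_eq_left (by omega : i + 1 ≤ i + d + 1), min_eq_left (by omega : i ≤ i + d + 1),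
          min_eq_left (Nat.le_add_right i d), _root_.dividedDiff, add_right_comm]
        ring
    · split_ifs with hj
      · exact one_pos
      · exact sub_pos.2 (hz (not_le.1 hj))
    · split_ifs <;> simp

theorem newtonForm (hG : MaximalMinorsPos G) {z : ℕ → R} (hz : StrictMono z) :
    MaximalMinorsPos (of fun a m => newtonForm z (G a) m (z m)) := by
  intro f hf
  convert hG.dividedDiff hz (∑ b, f b) f hf using 2
  ext a b
  have hb : f b ≤ ∑ b, f b := single_le_sum (fun _ _ => Nat.zero_le _) (mem_univ b)
  have := newtonForm_dividedDiff_apply_node z (G a) 0 (f b)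
  simpa [hb, _root_.dividedDiff] using this

end MaximalMinorsPos

end Newton

section Bessel

theorem prod_range_mul_succ_sub_mul_succ {K : Type*} [Field K] [CharZero K] {m k : ℕ}
    (hk : k ≤ m) :
    ∏ l ∈ range k, ((m : K) * (m + 1) - l * (l + 1)) =
      (m + k).factorial / (m - k).factorial := by
  induction k with
  | zero => simp [div_self, Nat.factorial_ne_zero]
  | succ k ih =>
    obtain ⟨d, rfl⟩ := Nat.exists_eq_add_of_le hk
    rw [prod_range_succ, ih (by omega), show k + 1 + d - k = d + 1 by omega,
      Nat.add_sub_cancel_left, ← add_assoc, Nat.factorial_succ d,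
      Nat.factorial_succ (k + 1 + d + k)]
    push_cast
    field_simp
    ring

theorem besselPoly_eq_newtonForm (m : ℕ) (x : ℝ) :
    besselPoly m x = newtonForm (fun l => (l : ℝ) * (l + 1))
      (fun k => (2 ^ k * (k.factorial : ℝ))⁻¹ * x ^ k) m (m * (m + 1)) := by
  refine sum_congr rfl fun k hk => ?_
  rw [prod_range_mul_succ_sub_mul_succ (Nat.lt_succ_iff.1 (mem_range.1 hk))]
  field_simp

theorem maximalMinorsPos_besselPoly {k : ℕ} {s : Fin k → ℝ} (hs : ∀ a, 0 < s a)
    (hmono : StrictMono s) : MaximalMinorsPos (of fun a m => besselPoly m (s a)) := by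
  have hnodes : StrictMono fun l : ℕ => (l : ℝ) * (l + 1) :=
    strictMono_nat_of_lt_succ fun l => by
      push_cast
      nlinarith [(Nat.cast_nonneg l : (0 : ℝ) ≤ l)]
  have hdiffs := (maximalMinorsPos_pow hs hmono).mul_columns
    (w := fun l => (2 ^ l * (l.factorial : ℝ))⁻¹) fun l => by positivity
  simp only [besselPoly_eq_newtonForm]
  exact hdiffs.newtonForm hnodes

end Bessel

section Perron

variable {ι : Type*} [Fintype ι]

theorem mulVec_pos_of_nonneg_of_ne_zero {R : Type*} [Semiring R] [PartialOrder R]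
    [IsStrictOrderedRing R] {A : Matrix ι ι R} (hA : ∀ i j, 0 < A i j) {x : ι → R} (hx : 0 ≤ x)
    (hx0 : x ≠ 0) (i : ι) : 0 < (A *ᵥ x) i := by
  obtain ⟨j, hj⟩ := Function.ne_iff.1 hx0
  exact sum_pos' (fun j _ => mul_nonneg (hA i j).le (hx j))
    ⟨j, mem_univ j, mul_pos (hA i j) ((hx j).lt_of_ne' hj)⟩

/- For positive `y`, the bound `A *ᵥ y ≤ r • y` holds exactly for `r ≥ max_i (A *ᵥ y) i / y i`. Take
`y = A *ᵥ x` minimizing this maximum. If the bound were not an equality, applying `A` would make it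
strict in every coordinate, so that `A *ᵥ y` would have a smaller maximum. -/
theorem exists_pos_eigenvector [Nonempty ι] {A : Matrix ι ι ℝ} (hA : ∀ i j, 0 < A i j) :
    ∃ (r : ℝ) (u : ι → ℝ), (∀ i, 0 < u i) ∧ A *ᵥ u = r • u := by
  let q (y : ι → ℝ) : ℝ := univ.sup' univ_nonempty fun i => (A *ᵥ y) i / y i
  have hq_smul {a : ℝ} (ha : a ≠ 0) (y : ι → ℝ) : q (a • y) = q y := by
    simp only [q, mulVec_smul, Pi.smul_apply, smul_eq_mul, mul_div_mul_left _ _ ha]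
  have hpos {x : ι → ℝ} (hx : x ∈ stdSimplex ℝ ι) : ∀ i, 0 < (A *ᵥ x) i :=
    mulVec_pos_of_nonneg_of_ne_zero hA hx.1 fun h => by simpa [h] using hx.2
  have hcont : ContinuousOn (fun x => q (A *ᵥ x)) (stdSimplex ℝ ι) :=
    ContinuousOn.finset_sup'_apply _ fun i _ =>
      ContinuousOn.div (by fun_prop) (by fun_prop) fun x hx => (hpos hx i).ne'
  obtain ⟨x, hx, hmin⟩ := (isCompact_stdSimplex ℝ ι).exists_isMinOn
    ((inferInstance : Nonempty (stdSimplex ℝ ι)).elim fun x => ⟨x, x.2⟩) hcont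
  set y := A *ᵥ x
  have hy : ∀ i, 0 < y i := hpos hx
  have hle : A *ᵥ y ≤ q y • y := fun i =>
    (div_le_iff₀ (hy i)).1 (le_sup' (fun i => (A *ᵥ y) i / y i) (mem_univ i))
  refine ⟨q y, y, hy, by_contra fun hne => ?_⟩
  have hlt : q (A *ᵥ y) < q y := (sup'_lt_iff _).2 fun i _ => by
    have h := mulVec_pos_of_nonneg_of_ne_zero hA (sub_nonneg.2 hle) (sub_ne_zero.2 (Ne.symm hne)) i
    rw [mulVec_sub, mulVec_smul] at h
    exact (div_lt_iff₀ (mulVec_pos_of_nonneg_of_ne_zero hA (fun i => (hy i).le)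
      (fun h0 => (hy i).ne' (congrFun h0 i)) i)).2 (sub_pos.1 h)
  have hS : 0 < ∑ i, y i := sum_pos (fun i _ => hy i) univ_nonempty
  have hmem : (∑ i, y i)⁻¹ • y ∈ stdSimplex ℝ ι :=
    ⟨fun i => mul_nonneg (inv_pos.2 hS).le (hy i).le, by
      simp [← mul_sum, inv_mul_cancel₀ hS.ne']⟩
  have hmin' : q y ≤ q (A *ᵥ (∑ i, y i)⁻¹ • y) := hmin hmem
  rw [mulVec_smul, hq_smul (inv_pos.2 hS).ne'] at hmin'
  exact hlt.not_ge hmin'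

theorem lt_of_isRoot_charpoly_of_colSum_lt [DecidableEq ι] {A : Matrix ι ι ℝ}
    (hA : ∀ i j, 0 ≤ A i j) {c : ℝ} (hc : ∀ j, ∑ i, A i j < c) {x : ℝ}
    (hx : A.charpoly.IsRoot x) : x < c := by
  by_contra! hcx
  refine det_ne_zero_of_sum_col_lt_diag (A := scalar ι x - A) (fun j => ?_)
    ((eval_charpoly A x).symm.trans hx)
  have hoff : ∑ i ∈ univ.erase j, ‖(scalar ι x - A) i j‖ = ∑ i ∈ univ.erase j, A i j :=
    sum_congr rfl fun i hi => by
      simp [diagonal_apply_ne _ (ne_of_mem_erase hi), abs_of_nonneg (hA i j)]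
  have hsum := add_sum_erase univ (fun i => A i j) (mem_univ j)
  rw [hoff, Real.norm_eq_abs]
  refine lt_of_lt_of_le ?_ (le_abs_self _)
  simp only [Matrix.sub_apply, scalar_apply, diagonal_apply_eq]
  linarith [hc j]

end Perron

section Deflation

variable {R : Type*} [CommRing R] {n : ℕ}

/-- The action of a matrix with constant row sums on the quotient by the constant vectors, in the
coordinates `x i - x (i + 1)`. -/
def rowSumDeflation (A : Matrix (Fin (n + 1)) (Fin (n + 1)) R) : Matrix (Fin n) (Fin n) R :=
  of fun i j => ∑ l ∈ Iic j.castSucc, (A i.castSucc l - A i.succ l)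

theorem det_eq_mul_det_sub_of_last_col_const (A : Matrix (Fin (n + 1)) (Fin (n + 1)) R) {c : R}
    (hc : ∀ i, A i (Fin.last n) = c) :
    A.det = c * (of fun i j : Fin n => A i.castSucc j.castSucc - A i.succ j.castSucc).det := by
  let H : Matrix (Fin (n + 1)) (Fin (n + 1)) R :=
    of fun i j => Fin.cases (A 0 j) (fun i => A i.succ j - A i.castSucc j) i
  have hdet : A.det = H.det :=
    det_eq_of_forall_row_eq_smul_add_pred (fun _ => 1) (fun j => by simp [H])
      (fun i j => by simp [H])
  have hcol (i : Fin n) : H i.succ (Fin.last n) = 0 := by simp [H, hc]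
  have hminor : H.submatrix (Fin.succAbove 0) (Fin.succAbove (Fin.last n)) =
      -(of fun i j : Fin n => A i.castSucc j.castSucc - A i.succ j.castSucc) := by
    ext i j
    simp [H]
  have hsign : ((-1 : R) ^ n) * (-1) ^ n = 1 := by simp [← mul_pow]
  rw [hdet, det_succ_column H (Fin.last n), Fin.sum_univ_succ, hminor, det_neg, Fintype.card_fin]
  simp only [hcol, H, of_apply, Fin.cases_zero, hc, Fin.val_zero, Fin.val_last, zero_add, mul_zero,
    zero_mul, sum_const_zero, add_zero]
  linear_combination (c * (of fun i j : Fin n =>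
    A i.castSucc j.castSucc - A i.succ j.castSucc).det) * hsign

theorem det_eq_mul_det_rowSumDeflation (A : Matrix (Fin (n + 1)) (Fin (n + 1)) R) {c : R}
    (hc : ∀ i, ∑ j, A i j = c) : A.det = c * (rowSumDeflation A).det := by
  have hpartial : (of fun i j => ∑ l ∈ Iic j, A i l).det = A.det :=
    det_eq_of_forall_col_eq_smul_add_pred (fun _ => 1) (by simp [← bot_eq_zero]) fun i j => by
      have hIic : Iic j.succ = insert j.succ (Iic j.castSucc) := by
        ext l
        rw [mem_Iic, mem_insert, mem_Iic, Fin.le_castSucc_iff, le_iff_eq_or_lt]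
      simp [hIic]
  rw [← hpartial, det_eq_mul_det_sub_of_last_col_const _ (c := c)]
  · simp [rowSumDeflation]
  · simp [← Fin.top_eq_last, hc]

theorem rowSumDeflation_charmatrix (A : Matrix (Fin (n + 1)) (Fin (n + 1)) R) :
    rowSumDeflation A.charmatrix = (rowSumDeflation A).charmatrix := by
  ext1 i j
  simp only [rowSumDeflation, of_apply, charmatrix_apply, sum_sub_distrib, diagonal_apply,
    sum_ite_eq, mem_Iic, map_sub, map_sum, Fin.succ_le_castSucc_iff, Fin.castSucc_le_castSucc_iff]
  rcases lt_trichotomy i j with h | rfl | h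
  · simp [h, h.le, h.ne]
  · simp only [le_refl, lt_irrefl, if_true, if_false]
    ring
  · simp only [h.not_ge, h.not_gt, h.ne', if_false]
    ring

theorem charpoly_eq_mul_charpoly_rowSumDeflation (A : Matrix (Fin (n + 1)) (Fin (n + 1)) R) {c : R}
    (hc : ∀ i, ∑ j, A i j = c) :
    A.charpoly = (X - C c) * (rowSumDeflation A).charpoly := by
  rw [charpoly, charpoly, ← rowSumDeflation_charmatrix]
  refine det_eq_mul_det_rowSumDeflation _ fun i => ?_
  simp [charmatrix_apply, diagonal_apply, sum_sub_distrib, ← map_sum, hc]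

theorem colSum_rowSumDeflation_lt [PartialOrder R] [IsStrictOrderedRing R]
    {A : Matrix (Fin (n + 1)) (Fin (n + 1)) R} (hA : ∀ i j, 0 < A i j) {c : R}
    (hc : ∀ i, ∑ j, A i j = c) (j : Fin n) : ∑ i, rowSumDeflation A i j < c := by
  let S (i : Fin (n + 1)) : R := ∑ l ∈ Iic j.castSucc, A i l
  calc ∑ i, rowSumDeflation A i j = ∑ i : Fin n, S i.castSucc - ∑ i : Fin n, S i.succ := by
        simp [rowSumDeflation, S]
    _ = S 0 - S (Fin.last n) := by
        linear_combination Fin.sum_univ_succ S - Fin.sum_univ_castSucc S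
    _ < S 0 := sub_lt_self _ (sum_pos (fun l _ => hA _ l) ⟨j.castSucc, by simp⟩)
    _ ≤ c := hc 0 ▸ sum_le_sum_of_subset_of_nonneg (subset_univ _) fun l _ _ => (hA 0 l).le

end Deflation

section Spectrum

theorem strictMono_snoc {α : Type*} [Preorder α] {k : ℕ} {f : Fin k → α} (hf : StrictMono f)
    {x : α} (hx : ∀ i, f i < x) : StrictMono (Fin.snoc f x : Fin (k + 1) → α) := by
  intro a b hab
  obtain ⟨a, rfl⟩ := a.eq_castSucc_of_ne_last (Fin.ne_last_of_lt hab)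
  obtain ⟨b, rfl⟩ | rfl := b.eq_castSucc_or_eq_last
  · simpa using hf (Fin.castSucc_lt_castSucc_iff.1 hab)
  · simpa using hx a

/-- All minors on consecutive rows (and arbitrary increasing columns) are positive. Deflation only
sees differences of neighbouring rows, which makes this weakening of strict total positivity the
property that it inherits. -/
def ConsecutiveRowMinorsPos {R ι : Type*} [CommRing R] [PartialOrder R] [Preorder ι] {n : ℕ}
    (A : Matrix (Fin n) ι R) : Prop :=
  ∀ (k i : ℕ) (h : i + k ≤ n),
    MaximalMinorsPos (A.submatrix (fun a : Fin k => (⟨i + a, by omega⟩ : Fin n)) id)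

namespace ConsecutiveRowMinorsPos

theorem entry_pos {R ι : Type*} [CommRing R] [PartialOrder R] [Preorder ι] {n : ℕ}
    {A : Matrix (Fin n) ι R} (hA : ConsecutiveRowMinorsPos A) (i : Fin n) (j : ι) : 0 < A i j := by
  simpa using hA 1 i (by omega) (fun _ => j) (Subsingleton.strictMono _)

theorem diagonal_mul_mul_diagonal {R : Type*} [CommRing R] [PartialOrder R]
    [IsStrictOrderedRing R] {n : ℕ} {A : Matrix (Fin n) (Fin n) R}
    (hA : ConsecutiveRowMinorsPos A) {v w : Fin n → R} (hv : ∀ i, 0 < v i) (hw : ∀ i, 0 < w i) :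
    ConsecutiveRowMinorsPos (diagonal v * A * diagonal w) := by
  intro k i h f hf
  have hdet := mul_pos
    (mul_pos (prod_pos (s := univ) fun (a : Fin k) _ => hv ⟨i + a, by omega⟩) (hA k i h f hf))
    (prod_pos (s := univ) fun b _ => hw (f b))
  rw [← det_diagonal, ← det_diagonal, ← det_mul, ← det_mul] at hdet
  convert hdet using 2
  ext a b
  simp

theorem rowSumDeflation {R : Type*} [CommRing R] [LinearOrder R] [IsStrictOrderedRing R] {n : ℕ}
    {A : Matrix (Fin (n + 1)) (Fin (n + 1)) R} (hA : ConsecutiveRowMinorsPos A) {c : R}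
    (hc0 : 0 ≤ c) (hc : ∀ i, ∑ j, A i j = c) : ConsecutiveRowMinorsPos (rowSumDeflation A) := by
  intro k i h f hf
  have hpartial := (hA (k + 1) i (by omega)).sum_Iic _
    (strictMono_snoc (Fin.strictMono_castSucc.comp hf) (x := Fin.last n) fun b =>
      Fin.castSucc_lt_last _)
  rw [det_eq_mul_det_sub_of_last_col_const _ (c := c)
    (fun a => by
      simp only [submatrix_apply, of_apply, Fin.snoc_last, id_eq]
      rw [← Fin.top_eq_last, Iic_top]
      exact hc _)] at hpartial
  convert pos_of_mul_pos_right hpartial hc0 using 2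
  ext a b
  simp [_root_.rowSumDeflation, add_assoc]

theorem exists_charpoly_eq_prod {n : ℕ} {A : Matrix (Fin n) (Fin n) ℝ}
    (hA : ConsecutiveRowMinorsPos A) :
    ∃ s : Finset ℝ, (∀ x ∈ s, 0 < x) ∧ A.charpoly = ∏ x ∈ s, (X - C x) := by
  induction n with
  | zero => exact ⟨∅, by simp, by simp [charpoly]⟩
  | succ n ih =>
    obtain ⟨c, u, hu, hAu⟩ := exists_pos_eigenvector hA.entry_pos
    let D := diagonal u⁻¹ * A * diagonal u
    have hD : ConsecutiveRowMinorsPos D :=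
      hA.diagonal_mul_mul_diagonal (fun i => inv_pos.2 (hu i)) hu
    have hrow (i) : ∑ j, D i j = c := by
      have hi : ∑ j, A i j * u j = c * u i := congrFun hAu i
      simp [D, mul_assoc, ← mul_sum, hi, mul_comm c, inv_mul_cancel_left₀ (hu i).ne']
    have hc : 0 < c := hrow 0 ▸ sum_pos (fun j _ => hD.entry_pos 0 j) univ_nonempty
    have hdefl := hD.rowSumDeflation hc.le hrow
    obtain ⟨s, hs, hchar⟩ := ih hdefl
    have hlt : ∀ x ∈ s, x < c := fun x hx =>
      lt_of_isRoot_charpoly_of_colSum_lt (fun i j => (hdefl.entry_pos i j).le)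
        (colSum_rowSumDeflation_lt hD.entry_pos hrow)
        (by rw [hchar, IsRoot, eval_prod, prod_eq_zero hx]; simp)
    refine ⟨s.cons c fun hmem => (hlt c hmem).false, by simpa using ⟨hc, hs⟩, ?_⟩
    have hconj : A.charpoly = D.charpoly := by
      have hdiag : diagonal u * diagonal u⁻¹ = 1 := by
        simp [diagonal_mul_diagonal, mul_inv_cancel₀ (hu _).ne']
      rw [charpoly_mul_comm, ← Matrix.mul_assoc, hdiag, Matrix.one_mul]
    rw [hconj, charpoly_eq_mul_charpoly_rowSumDeflation D hrow, hchar, prod_cons]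

end ConsecutiveRowMinorsPos

end Spectrum

theorem bessel_collocation_eigenvalues (n : ℕ) (t : Fin n → ℝ)
    (hpos : ∀ i, 0 < t i) (hmono : StrictMono t) :
    let M : Matrix (Fin n) (Fin n) ℝ := fun i j => besselPoly j (t i)
    (∀ μ : ℂ, ((M.map (algebraMap ℝ ℂ)).charpoly).IsRoot μ → μ.im = 0 ∧ 0 < μ.re) ∧
      ((M.map (algebraMap ℝ ℂ)).charpoly).roots.Nodup := by
  intro M
  have hM : ConsecutiveRowMinorsPos M := fun k i h f hf =>
    maximalMinorsPos_besselPoly (fun a => hpos ⟨i + a, by omega⟩)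
      (fun a b hab => hmono (Nat.add_lt_add_left hab i)) (fun b => f b) hf
  obtain ⟨s, hs, hchar⟩ := hM.exists_charpoly_eq_prod
  have hroots : (M.map (algebraMap ℝ ℂ)).charpoly.roots = s.val.map (algebraMap ℝ ℂ) := by
    rw [charpoly_map, hchar, Splits.roots_map (.prod fun x _ => .X_sub_C x), roots_prod_X_sub_C]
  refine ⟨fun μ hμ => ?_, hroots ▸ s.nodup.map (algebraMap ℝ ℂ).injective⟩
  rw [← mem_roots (charpoly_monic _).ne_zero, hroots, Multiset.mem_map] at hμ
  obtain ⟨x, hx, rfl⟩ := hμ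
  exact ⟨Complex.ofReal_im x, hs x hx⟩
end
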